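/- Half-modulus identities for S' (formulas (n8) and (n12)): Let τ lie in the complex upper half-plane and let u ∈ ℂ be such that θ₁(u,τ)·θ₄(u,τ) ≠ 0 and θ₁(u, τ/2) ≠ 0. Then (a) S'(u,τ) = 2ζ₁(u,τ) − ζ₁(u, τ/2), and (b) ℘₁(u, τ/2) − ℘₂(0, τ/2) = S'(u,τ)². -/

import Mathlib

open Complex

/-- Jacobi theta function θ₁(u,τ). -/
noncomputable def theta1 (u τ : ℂ) : ℂ :=
  -∑' k : ℤ, Complex.exp ((Real.pi : ℂ) * Complex.I * τ * ((k : ℂ) + 1/2)^2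
      + 2 * (Real.pi : ℂ) * Complex.I * (u + 1/2) * ((k : ℂ) + 1/2))

/-- Jacobi theta function θ₂(u,τ). -/
noncomputable def theta2 (u τ : ℂ) : ℂ :=
  ∑' k : ℤ, Complex.exp ((Real.pi : ℂ) * Complex.I * τ * ((k : ℂ) + 1/2)^2
      + 2 * (Real.pi : ℂ) * Complex.I * u * ((k : ℂ) + 1/2))

/-- Jacobi theta function θ₃(u,τ). -/
noncomputable def theta3 (u τ : ℂ) : ℂ :=
  ∑' k : ℤ, Complex.exp ((Real.pi : ℂ) * Complex.I * τ * (k : ℂ)^2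
      + 2 * (Real.pi : ℂ) * Complex.I * u * (k : ℂ))

/-- Jacobi theta function θ₄(u,τ). -/
noncomputable def theta4 (u τ : ℂ) : ℂ :=
  ∑' k : ℤ, Complex.exp ((Real.pi : ℂ) * Complex.I * τ * (k : ℂ)^2
      + 2 * (Real.pi : ℂ) * Complex.I * (u + 1/2) * (k : ℂ))

/-- ζ_a(u,τ) = θ_a'(u,τ)/θ_a(u,τ). -/
noncomputable def zeta1 (u τ : ℂ) : ℂ := deriv (fun v => theta1 v τ) u / theta1 u τ
noncomputable def zeta2 (u τ : ℂ) : ℂ := deriv (fun v => theta2 v τ) u / theta2 u τ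
noncomputable def zeta3 (u τ : ℂ) : ℂ := deriv (fun v => theta3 v τ) u / theta3 u τ
noncomputable def zeta4 (u τ : ℂ) : ℂ := deriv (fun v => theta4 v τ) u / theta4 u τ

/-- ℘_a(u,τ) = −∂_u ζ_a(u,τ). -/
noncomputable def wp1 (u τ : ℂ) : ℂ := -deriv (fun v => zeta1 v τ) u
noncomputable def wp2 (u τ : ℂ) : ℂ := -deriv (fun v => zeta2 v τ) u
noncomputable def wp1' (u τ : ℂ) : ℂ := deriv (fun v => wp1 v τ) u
noncomputable def wp2' (u τ : ℂ) : ℂ := deriv (fun v => wp2 v τ) u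

/-- S'(u,τ) = ζ₁(u,τ) − ζ₄(u,τ). -/
noncomputable def Sp (u τ : ℂ) : ℂ := zeta1 u τ - zeta4 u τ
/-- S''(u,τ) = ∂_u S'(u,τ). -/
noncomputable def Spp (u τ : ℂ) : ℂ := deriv (fun v => Sp v τ) u
/-- S'''(u,τ) = ∂_u S''(u,τ). -/
noncomputable def Sppp (u τ : ℂ) : ℂ := deriv (fun v => Spp v τ) u

/-- Partial derivative in the j-th coordinate of a ℂ-valued function on ℝ^N. -/
noncomputable def pdC {N : ℕ} (j : Fin N) (f : (Fin N → ℝ) → ℂ) (x : Fin N → ℝ) : ℂ :=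
  fderiv ℝ f x (Pi.single j 1)

/-- Partial derivative in the j-th coordinate of an ℝ-valued function on ℝ^d. -/
noncomputable def pd {d : ℕ} (j : Fin d) (f : (Fin d → ℝ) → ℝ) (x : Fin d → ℝ) : ℝ :=
  fderiv ℝ f x (Pi.single j 1)

/-!
The product of two theta functions of modulus `τ` is a double series over `ℤ × ℤ`; splitting it by
the parity of the sum of the indices turns it into products of theta functions of modulus `2τ`, and
`2 θ₁(x + y, 2τ) θ₄(x - y, 2τ) = θ₁(x, τ) θ₂(y, τ) + θ₂(x, τ) θ₁(y, τ)` follows. At `y = 0` this is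
a product formula for `θ₁(x, τ)`, whose logarithmic derivative is
`ζ₁(x, τ) = ζ₁(x, 2τ) + ζ₄(x, 2τ)`. Write `f = θ₁(·, 2τ)` and `g = θ₄(·, 2τ)`. The second derivative
in `x` at `y = 0` contains the cross term `2 f' g'`, the second derivative in `y` at `y = 0` has
`-2 f' g'`; comparing them expresses `4 ζ₁(x, 2τ) ζ₄(x, 2τ)` through `℘₁(x, τ)` and `℘₂(0, τ)`, and
`(ζ₁ - ζ₄)² = (ζ₁ + ζ₄)² - 4 ζ₁ ζ₄`.
-/

open scoped Real

section Deriv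

variable {𝕜 : Type*} [NontriviallyNormedField 𝕜]

section Parity

variable {F : Type*} [NormedAddCommGroup F] [NormedSpace 𝕜 F] {f : 𝕜 → F}

lemma odd_deriv_of_even (hf : Function.Even f) : Function.Odd (deriv f) := by
  intro x
  have h := deriv_comp_neg f x
  rw [funext hf] at h
  rw [h, neg_neg]

lemma even_deriv_of_odd (hf : Function.Odd f) : Function.Even (deriv f) := by
  intro x
  have h := deriv_comp_neg f x
  rw [funext hf, deriv.fun_neg] at h
  exact (neg_injective h).symm

end Parity

lemma deriv_logDeriv {𝕜' : Type*} [NontriviallyNormedField 𝕜'] [NormedAlgebra 𝕜 𝕜']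
    {f : 𝕜 → 𝕜'} {x : 𝕜} (hf : DifferentiableAt 𝕜 f x)
    (hf' : DifferentiableAt 𝕜 (deriv f) x) (hx : f x ≠ 0) :
    deriv (logDeriv f) x = deriv (deriv f) x / f x - logDeriv f x ^ 2 := by
  rw [logDeriv, deriv_div hf' hf hx, Pi.div_apply]
  field_simp

section SecondDerivative

variable {A : Type*} [NormedRing A] [NormedAlgebra 𝕜 A] {f g : 𝕜 → A}

lemma deriv_deriv_add {x : 𝕜} (hf : ContDiffAt 𝕜 2 f x) (hg : ContDiffAt 𝕜 2 g x) :
    deriv (deriv fun y => f y + g y) x = deriv (deriv f) x + deriv (deriv g) x := by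
  simpa only [iteratedDeriv_succ, iteratedDeriv_zero] using iteratedDeriv_fun_add hf hg

lemma deriv_deriv_mul {x : 𝕜} (hf : ContDiffAt 𝕜 2 f x) (hg : ContDiffAt 𝕜 2 g x) :
    deriv (deriv fun y => f y * g y) x =
      deriv (deriv f) x * g x + 2 * (deriv f x * deriv g x) + f x * deriv (deriv g) x := by
  have h := iteratedDeriv_fun_mul hf hg
  simp only [Finset.sum_range_succ, Finset.sum_range_zero, iteratedDeriv_succ,
    iteratedDeriv_zero] at h
  rw [h]
  simp [mul_assoc]
  abel

lemma deriv_deriv_mul_comp_const_sub (hf : ContDiff 𝕜 2 f) (hg : ContDiff 𝕜 2 g) (x y : 𝕜) :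
    deriv (deriv fun z => f (x + z) * g (x - z)) y =
      deriv (deriv f) (x + y) * g (x - y) - 2 * (deriv f (x + y) * deriv g (x - y))
        + f (x + y) * deriv (deriv g) (x - y) := by
  have hf' : ContDiff 𝕜 2 fun z => f (x + z) := by fun_prop
  have hg' : ContDiff 𝕜 2 fun z => g (x - z) := by fun_prop
  rw [deriv_deriv_mul hf'.contDiffAt hg'.contDiffAt, funext (deriv_comp_const_add f x),
    funext (deriv_comp_const_sub g x)]
  simp only [deriv_comp_const_add, deriv_comp_const_sub, deriv.fun_neg, neg_neg, mul_neg,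
    ← sub_eq_add_neg]

end SecondDerivative

end Deriv

section ParitySplitting

lemma range_add_sub_eq :
    Set.range (fun p : ℤ × ℤ => (p.1 + p.2, p.1 - p.2)) = {p | Even (p.1 + p.2)} := by
  ext ⟨k, l⟩
  constructor
  · rintro ⟨⟨m, n⟩, h⟩
    obtain ⟨rfl, rfl⟩ := Prod.mk.inj h
    exact ⟨m, by ring⟩
  · rintro ⟨m, h⟩
    exact ⟨(m, k - m), by ext <;> grind⟩

lemma range_add_add_one_sub_eq :
    Set.range (fun p : ℤ × ℤ => (p.1 + p.2 + 1, p.1 - p.2)) = {p | Even (p.1 + p.2)}ᶜ := by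
  ext ⟨k, l⟩
  simp only [Set.mem_compl_iff, Set.mem_ofPred_eq, Int.not_even_iff_odd]
  constructor
  · rintro ⟨⟨m, n⟩, h⟩
    obtain ⟨rfl, rfl⟩ := Prod.mk.inj h
    exact ⟨m, by ring⟩
  · rintro ⟨m, h⟩
    exact ⟨(m, m - l), by ext <;> grind⟩

lemma hasSum_of_hasSum_add_sub {M : Type*} [AddCommMonoid M] [TopologicalSpace M]
    [ContinuousAdd M] {F : ℤ × ℤ → M} {s t : M}
    (hs : HasSum (fun p : ℤ × ℤ => F (p.1 + p.2, p.1 - p.2)) s)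
    (ht : HasSum (fun p : ℤ × ℤ => F (p.1 + p.2 + 1, p.1 - p.2)) t) :
    HasSum F (s + t) := by
  have inj_even : Function.Injective fun p : ℤ × ℤ => (p.1 + p.2, p.1 - p.2) := by
    rintro ⟨m, n⟩ ⟨m', n'⟩ h
    grind
  have inj_odd : Function.Injective fun p : ℤ × ℤ => (p.1 + p.2 + 1, p.1 - p.2) := by
    rintro ⟨m, n⟩ ⟨m', n'⟩ h
    grind
  refine HasSum.add_isCompl ?_ (inj_even.hasSum_range_iff.2 hs) (inj_odd.hasSum_range_iff.2 ht)
  rw [range_add_sub_eq, range_add_add_one_sub_eq]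
  exact isCompl_compl

end ParitySplitting

/-- The theta function `ϑ[a](u, τ)` with characteristic `a`, the common form of the four Jacobi
theta functions: `θ₂` and `θ₃` have `a = 1/2` and `a = 0`, and `θ₁`, `θ₄` are, up to sign, their
translates by `1/2`. The second characteristic of the classical notation is absorbed into `u`. -/
noncomputable def thetaChar (a u τ : ℂ) : ℂ :=
  ∑' k : ℤ, cexp (π * I * τ * (k + a) ^ 2 + 2 * π * I * u * (k + a))

section ThetaChar

variable (a b u v : ℂ) {τ : ℂ}

lemma thetaChar_term_eq (τ : ℂ) (k : ℤ) :
    cexp (π * I * τ * (k + a) ^ 2 + 2 * π * I * u * (k + a)) =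
      cexp (π * I * τ * a ^ 2 + 2 * π * I * u * a) * jacobiTheta₂_term k (u + a * τ) τ := by
  rw [jacobiTheta₂_term, ← Complex.exp_add]
  ring_nf

lemma thetaChar_eq_mul_jacobiTheta₂ (τ : ℂ) :
    thetaChar a u τ =
      cexp (π * I * τ * a ^ 2 + 2 * π * I * u * a) * jacobiTheta₂ (u + a * τ) τ := by
  simp_rw [thetaChar, thetaChar_term_eq, tsum_mul_left, jacobiTheta₂]

lemma summable_thetaChar_term (hτ : 0 < τ.im) :
    Summable fun k : ℤ => cexp (π * I * τ * (k + a) ^ 2 + 2 * π * I * u * (k + a)) := by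
  simp_rw [thetaChar_term_eq]
  exact ((summable_jacobiTheta₂_term_iff _ τ).2 hτ).mul_left _

lemma differentiable_thetaChar (hτ : 0 < τ.im) : Differentiable ℂ fun u => thetaChar a u τ := by
  have hθ : Differentiable ℂ fun u => jacobiTheta₂ u τ :=
    fun u => differentiableAt_jacobiTheta₂_fst u hτ
  simp_rw [thetaChar_eq_mul_jacobiTheta₂]
  fun_prop

lemma thetaChar_add_one (τ : ℂ) :
    thetaChar a (u + 1) τ = cexp (2 * π * I * a) * thetaChar a u τ := by
  simp_rw [thetaChar_eq_mul_jacobiTheta₂, add_right_comm u 1, jacobiTheta₂_add_left, ← mul_assoc,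
    ← Complex.exp_add]
  ring_nf

lemma thetaChar_neg (τ : ℂ) : thetaChar a (-u) τ = thetaChar (-a) u τ := by
  simp_rw [thetaChar_eq_mul_jacobiTheta₂, ← jacobiTheta₂_neg_left (u + -a * τ)]
  ring_nf

lemma thetaChar_char_add_one (τ : ℂ) : thetaChar (a + 1) u τ = thetaChar a u τ := by
  conv_rhs => rw [thetaChar, ← (Equiv.addRight (1 : ℤ)).tsum_eq]
  simp only [thetaChar, Equiv.coe_addRight, Int.cast_add, Int.cast_one, add_assoc, add_comm 1 a]

lemma hasSum_thetaChar_mul_thetaChar (hτ : 0 < τ.im) :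
    HasSum (fun p : ℤ × ℤ =>
        cexp (π * I * τ * (p.1 + a) ^ 2 + 2 * π * I * u * (p.1 + a)) *
          cexp (π * I * τ * (p.2 + b) ^ 2 + 2 * π * I * v * (p.2 + b)))
      (thetaChar a u τ * thetaChar b v τ) := by
  have ha := summable_thetaChar_term a u hτ
  have hb := summable_thetaChar_term b v hτ
  have hab := summable_mul_of_summable_norm ha.norm hb.norm
  exact (ha.hasSum.mul hb.hasSum hab :)

theorem thetaChar_mul_thetaChar (hτ : 0 < τ.im) :
    thetaChar a u τ * thetaChar b v τ =
      thetaChar ((a + b) / 2) (u + v) (2 * τ) * thetaChar ((a - b) / 2) (u - v) (2 * τ) +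
      thetaChar ((a + b + 1) / 2) (u + v) (2 * τ) *
        thetaChar ((a - b + 1) / 2) (u - v) (2 * τ) := by
  have hτ' : 0 < (2 * τ).im := by simpa using hτ
  refine (hasSum_thetaChar_mul_thetaChar a b u v hτ).unique (hasSum_of_hasSum_add_sub ?_ ?_)
  · convert! hasSum_thetaChar_mul_thetaChar ((a + b) / 2) ((a - b) / 2) (u + v) (u - v) hτ' using 2
    simp_rw [← Complex.exp_add]
    push_cast
    ring_nf
  · convert! hasSum_thetaChar_mul_thetaChar ((a + b + 1) / 2) ((a - b + 1) / 2) (u + v) (u - v) hτ'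
      using 2
    simp_rw [← Complex.exp_add]
    push_cast
    ring_nf

end ThetaChar

section JacobiTheta

variable (u v : ℂ) {τ : ℂ}

lemma theta2_eq_thetaChar (τ : ℂ) : theta2 u τ = thetaChar (1 / 2) u τ := rfl

lemma theta1_eq_neg_thetaChar (τ : ℂ) : theta1 u τ = -thetaChar (1 / 2) (u + 1 / 2) τ := rfl

lemma theta4_eq_thetaChar (τ : ℂ) : theta4 u τ = thetaChar 0 (u + 1 / 2) τ := by
  simp only [theta4, thetaChar, add_zero]

lemma thetaChar_neg_half (τ : ℂ) : thetaChar (-(1 / 2)) u τ = thetaChar (1 / 2) u τ := by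
  rw [← thetaChar_char_add_one]
  norm_num

lemma even_theta2 (τ : ℂ) : Function.Even fun u => theta2 u τ := fun u => by
  simp only [theta2_eq_thetaChar, thetaChar_neg, thetaChar_neg_half]

lemma odd_theta1 (τ : ℂ) : Function.Odd fun u => theta1 u τ := fun u => by
  have h := thetaChar_add_one (1 / 2) (u - 1 / 2) τ
  rw [show 2 * π * I * (1 / 2) = π * I by ring, Complex.exp_pi_mul_I,
    show u - 1 / 2 + 1 = u + 1 / 2 by ring] at h
  simp only [theta1_eq_neg_thetaChar]
  rw [show -u + 1 / 2 = -(u - 1 / 2) by ring, thetaChar_neg, thetaChar_neg_half, h, neg_one_mul,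
    neg_neg]

lemma even_theta4 (τ : ℂ) : Function.Even fun u => theta4 u τ := fun u => by
  have h := thetaChar_add_one 0 (u - 1 / 2) τ
  rw [mul_zero, Complex.exp_zero, one_mul, show u - 1 / 2 + 1 = u + 1 / 2 by ring] at h
  simp only [theta4_eq_thetaChar]
  rw [show -u + 1 / 2 = -(u - 1 / 2) by ring, thetaChar_neg, neg_zero, h]

lemma differentiable_theta2 (hτ : 0 < τ.im) : Differentiable ℂ fun u => theta2 u τ :=
  differentiable_thetaChar (1 / 2) hτ

lemma differentiable_theta1 (hτ : 0 < τ.im) : Differentiable ℂ fun u => theta1 u τ :=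
  ((differentiable_thetaChar (1 / 2) hτ).comp (differentiable_id.add_const (1 / 2))).neg

lemma differentiable_theta4 (hτ : 0 < τ.im) : Differentiable ℂ fun u => theta4 u τ := by
  simp_rw [theta4_eq_thetaChar]
  exact (differentiable_thetaChar 0 hτ).comp (differentiable_id.add_const (1 / 2))

lemma thetaChar_half_mul_thetaChar_half (hτ : 0 < τ.im) :
    thetaChar (1 / 2) u τ * thetaChar (1 / 2) v τ =
      thetaChar (1 / 2) (u + v) (2 * τ) * thetaChar 0 (u - v) (2 * τ) +
        thetaChar 0 (u + v) (2 * τ) * thetaChar (1 / 2) (u - v) (2 * τ) := by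
  rw [thetaChar_mul_thetaChar _ _ _ _ hτ, show (1 / 2 + 1 / 2 : ℂ) / 2 = 1 / 2 by norm_num,
    show (1 / 2 - 1 / 2 : ℂ) / 2 = 0 by norm_num,
    show (1 / 2 + 1 / 2 + 1 : ℂ) / 2 = 0 + 1 by norm_num,
    show (1 / 2 - 1 / 2 + 1 : ℂ) / 2 = 1 / 2 by norm_num, thetaChar_char_add_one]

theorem theta1_mul_theta2 (hτ : 0 < τ.im) :
    theta1 u τ * theta2 v τ =
      theta1 (u + v) (2 * τ) * theta4 (u - v) (2 * τ) +
        theta4 (u + v) (2 * τ) * theta1 (u - v) (2 * τ) := by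
  have h := thetaChar_half_mul_thetaChar_half (u + 1 / 2) v hτ
  rw [add_right_comm, add_sub_right_comm] at h
  simp only [theta1_eq_neg_thetaChar, theta2_eq_thetaChar, theta4_eq_thetaChar]
  linear_combination -h

theorem two_mul_theta1_add_mul_theta4_sub (hτ : 0 < τ.im) :
    2 * (theta1 (u + v) (2 * τ) * theta4 (u - v) (2 * τ)) =
      theta1 u τ * theta2 v τ + theta2 u τ * theta1 v τ := by
  have h := theta1_mul_theta2 v u hτ
  rw [← neg_sub u v, (odd_theta1 _).eq, (even_theta4 _).eq, add_comm v u] at h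
  linear_combination -theta1_mul_theta2 u v hτ - h

theorem two_mul_theta1_mul_theta4 (hτ : 0 < τ.im) :
    2 * (theta1 u (2 * τ) * theta4 u (2 * τ)) = theta1 u τ * theta2 0 τ := by
  simpa [(odd_theta1 τ).map_zero] using two_mul_theta1_add_mul_theta4_sub u 0 hτ

end JacobiTheta

section HalfModulus

variable {u τ : ℂ}

lemma theta1_ne_zero_and_theta2_zero_ne_zero (hτ : 0 < τ.im)
    (h : theta1 u (2 * τ) * theta4 u (2 * τ) ≠ 0) : theta1 u τ ≠ 0 ∧ theta2 0 τ ≠ 0 := by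
  rw [← mul_ne_zero_iff, ← two_mul_theta1_mul_theta4 u hτ]
  exact mul_ne_zero two_ne_zero h

theorem zeta1_eq_zeta1_add_zeta4 (hτ : 0 < τ.im)
    (h : theta1 u (2 * τ) * theta4 u (2 * τ) ≠ 0) :
    zeta1 u τ = zeta1 u (2 * τ) + zeta4 u (2 * τ) := by
  have hτ' : 0 < (2 * τ).im := by simpa using hτ
  obtain ⟨-, hθ₂⟩ := theta1_ne_zero_and_theta2_zero_ne_zero hτ h
  calc zeta1 u τ = logDeriv (fun v => theta1 v τ * theta2 0 τ) u :=
        (logDeriv_mul_const u _ hθ₂).symm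
    _ = logDeriv (fun v => 2 * (theta1 v (2 * τ) * theta4 v (2 * τ))) u := by
        simp_rw [two_mul_theta1_mul_theta4 _ hτ]
    _ = logDeriv (fun v => theta1 v (2 * τ) * theta4 v (2 * τ)) u :=
        logDeriv_const_mul u 2 two_ne_zero
    _ = zeta1 u (2 * τ) + zeta4 u (2 * τ) :=
        logDeriv_mul u (left_ne_zero_of_mul h) (right_ne_zero_of_mul h)
          (differentiable_theta1 hτ' u) (differentiable_theta4 hτ' u)

lemma wp1_eq_zeta1_sq_sub (hτ : 0 < τ.im) (h : theta1 u τ ≠ 0) :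
    wp1 u τ = zeta1 u τ ^ 2 - deriv (deriv fun v => theta1 v τ) u / theta1 u τ := by
  have hd := differentiable_theta1 hτ
  calc wp1 u τ = -deriv (logDeriv fun v => theta1 v τ) u := rfl
    _ = -(deriv (deriv fun v => theta1 v τ) u / theta1 u τ - zeta1 u τ ^ 2) := by
        rw [deriv_logDeriv (hd u) (hd.deriv u) h, logDeriv_apply, zeta1]
    _ = zeta1 u τ ^ 2 - deriv (deriv fun v => theta1 v τ) u / theta1 u τ := neg_sub _ _

lemma wp2_zero_eq_neg_deriv_deriv_div (hτ : 0 < τ.im) (h : theta2 0 τ ≠ 0) :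
    wp2 0 τ = -(deriv (deriv fun v => theta2 v τ) 0 / theta2 0 τ) := by
  have hd := differentiable_theta2 hτ
  have hd_zero : deriv (fun v => theta2 v τ) 0 = 0 :=
    (odd_deriv_of_even (even_theta2 τ)).map_zero
  calc wp2 0 τ = -deriv (logDeriv fun v => theta2 v τ) 0 := rfl
    _ = -(deriv (deriv fun v => theta2 v τ) 0 / theta2 0 τ) := by
        rw [deriv_logDeriv (hd 0) (hd.deriv 0) h, logDeriv_apply, hd_zero, zero_div,
          zero_pow two_ne_zero, sub_zero]

theorem deriv_deriv_theta1_mul_theta2_zero_sub (u : ℂ) (hτ : 0 < τ.im) :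
    deriv (deriv fun v => theta1 v τ) u * theta2 0 τ
        - theta1 u τ * deriv (deriv fun v => theta2 v τ) 0 =
      8 * (deriv (fun v => theta1 v (2 * τ)) u * deriv (fun v => theta4 v (2 * τ)) u) := by
  have hτ' : 0 < (2 * τ).im := by simpa using hτ
  have d1 : ContDiff ℂ 2 fun v => theta1 v (2 * τ) := (differentiable_theta1 hτ').contDiff
  have d4 : ContDiff ℂ 2 fun v => theta4 v (2 * τ) := (differentiable_theta4 hτ').contDiff
  have along_u : deriv (deriv fun v => theta1 v τ) u * theta2 0 τ =
      2 * deriv (deriv fun v => theta1 v (2 * τ) * theta4 v (2 * τ)) u := by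
    have h := congrArg (fun F => deriv (deriv F) u)
      (funext fun v => two_mul_theta1_mul_theta4 v hτ)
    simpa using h.symm
  have along_v : theta1 u τ * deriv (deriv fun v => theta2 v τ) 0 =
      2 * deriv (deriv fun v => theta1 (u + v) (2 * τ) * theta4 (u - v) (2 * τ)) 0 := by
    have odd_deriv_deriv := odd_deriv_of_even (even_deriv_of_odd (odd_theta1 τ))
    have e1 : ContDiff ℂ 2 fun v => theta1 v τ := (differentiable_theta1 hτ).contDiff
    have e2 : ContDiff ℂ 2 fun v => theta2 v τ := (differentiable_theta2 hτ).contDiff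
    have h := congrArg (fun F => deriv (deriv F) 0)
      (funext fun v => two_mul_theta1_add_mul_theta4_sub u v hτ)
    rw [deriv_deriv_add (by fun_prop) (by fun_prop)] at h
    simpa [odd_deriv_deriv.map_zero] using h.symm
  rw [along_u, along_v, deriv_deriv_mul d1.contDiffAt d4.contDiffAt,
    deriv_deriv_mul_comp_const_sub d1 d4]
  simp only [add_zero, sub_zero]
  ring

theorem wp1_sub_wp2_zero (hτ : 0 < τ.im) (h : theta1 u (2 * τ) * theta4 u (2 * τ) ≠ 0) :
    wp1 u τ - wp2 0 τ = zeta1 u τ ^ 2 - 4 * (zeta1 u (2 * τ) * zeta4 u (2 * τ)) := by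
  obtain ⟨hθ₁, hθ₂⟩ := theta1_ne_zero_and_theta2_zero_ne_zero hτ h
  have hζζ : 4 * (zeta1 u (2 * τ) * zeta4 u (2 * τ)) =
      deriv (deriv fun v => theta1 v τ) u / theta1 u τ
        - deriv (deriv fun v => theta2 v τ) 0 / theta2 0 τ := by
    rw [div_sub_div _ _ hθ₁ hθ₂, deriv_deriv_theta1_mul_theta2_zero_sub u hτ,
      ← two_mul_theta1_mul_theta4 u hτ, zeta1, zeta4]
    ring
  rw [wp1_eq_zeta1_sq_sub hτ hθ₁, wp2_zero_eq_neg_deriv_deriv_div hτ hθ₂, hζζ]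
  ring

end HalfModulus

/-- Half-modulus identities for S' (formulas (n8) and (n12)):
(a) S'(u,τ) = 2ζ₁(u,τ) − ζ₁(u,τ/2); (b) ℘₁(u,τ/2) − ℘₂(0,τ/2) = S'(u,τ)². -/
theorem Sp_half_modulus (τ u : ℂ) (hτ : 0 < τ.im)
    (h1 : theta1 u τ * theta4 u τ ≠ 0)
    (h2 : theta1 u (τ / 2) ≠ 0) :
    Sp u τ = 2 * zeta1 u τ - zeta1 u (τ / 2)
    ∧ wp1 u (τ / 2) - wp2 0 (τ / 2) = Sp u τ ^ 2 := by
  obtain ⟨σ, rfl⟩ : ∃ σ, τ = 2 * σ := ⟨τ / 2, by ring⟩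
  have hσ : 0 < σ.im := by simpa using hτ
  rw [mul_div_cancel_left₀ σ two_ne_zero]
  have hζ := zeta1_eq_zeta1_add_zeta4 hσ h1
  constructor
  · rw [hζ, Sp]
    ring
  · rw [wp1_sub_wp2_zero hσ h1, hζ, Sp]
    ring
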